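/- Let c, s₁ ∈ ℝ with c > 0 and −c² < s₁ < c²/3. Then the set of solutions (u,v) ∈ ℝ² of f_c(u,v) = (s₁, 0) is exactly the four points ((−c + √(c² − 3s₁))/3, 0), ((−c − √(c² − 3s₁))/3, 0), (c/3, √((c² + s₁)/3)), (c/3, −√((c² + s₁)/3)), and the sum of the reciprocals of the Jacobian determinant 4c² − 36(u² + v²) over these four points is zero. -/

import Mathlib

/-!
On the axis `s₂ = 0` the second equation reads `2v(3u - c) = 0`, so a solution lies on one of the
lines `v = 0` and `u = c/3`. There the first equation becomes `(3u + c)² = r²` with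
`r² = c² - 3s₁`, respectively `v² = t²` with `t² = (c² + s₁)/3`. The Jacobian determinants are
`4r(2c - r)` and `-4r(2c + r)` at the solutions on the first line and `-36t²` at both solutions on
the second. Since `(2c - r)(2c + r) = 9t²`, the magnifications on the first line add up to
`1/(18t²)`, those on the second to `-1/(18t²)`.
-/

section EllipticUmbilic

variable {K : Type*} [Field K]

/-- The generic elliptic umbilic map `f_c` on the plane, over an arbitrary field so that real and
complex solutions are treated alike. -/
def ellipticUmbilic (c : K) (p : K × K) : K × K :=
  (3 * p.2 ^ 2 - 3 * p.1 ^ 2 - 2 * c * p.1, 6 * p.1 * p.2 - 2 * c * p.2)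

/-- The Jacobian determinant of `ellipticUmbilic c`, whose reciprocal is the signed magnification.
It is given by its closed form, as derivatives over a general field are only formal. -/
def ellipticUmbilicJacobian (c : K) (p : K × K) : K :=
  4 * c ^ 2 - 36 * (p.1 ^ 2 + p.2 ^ 2)

variable {c s r t u v : K}

theorem ellipticUmbilic_snd_eq_zero_iff [NeZero (2 : K)] [NeZero (3 : K)] :
    (ellipticUmbilic c (u, v)).2 = 0 ↔ v = 0 ∨ u = c / 3 := by
  have factored : (ellipticUmbilic c (u, v)).2 = 2 * (v * (u * 3 - c)) := by
    simp only [ellipticUmbilic]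
    ring
  rw [factored, mul_eq_zero_iff_left two_ne_zero, mul_eq_zero, sub_eq_zero,
    eq_div_iff three_ne_zero]

theorem ellipticUmbilic_fst_zero_right_eq_iff [NeZero (3 : K)] (hr : r ^ 2 = c ^ 2 - 3 * s) :
    (ellipticUmbilic c (u, 0)).1 = s ↔ u = (-c + r) / 3 ∨ u = (-c - r) / 3 := by
  have completed_square : 3 * ((ellipticUmbilic c (u, 0)).1 - s) = r ^ 2 - (u * 3 + c) ^ 2 := by
    simp only [ellipticUmbilic]
    linear_combination -hr
  calc (ellipticUmbilic c (u, 0)).1 = s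
      ↔ (u * 3 + c) ^ 2 = r ^ 2 := by
        rw [← sub_eq_zero, ← mul_eq_zero_iff_left (three_ne_zero (α := K)), completed_square,
          sub_eq_zero, eq_comm]
    _ ↔ u * 3 + c = r ∨ u * 3 + c = -r := sq_eq_sq_iff_eq_or_eq_neg
    _ ↔ u = (-c + r) / 3 ∨ u = (-c - r) / 3 := by
        rw [eq_div_iff three_ne_zero, eq_div_iff three_ne_zero, ← eq_sub_iff_add_eq,
          ← eq_sub_iff_add_eq, neg_add_eq_sub, neg_sub_comm]

theorem ellipticUmbilic_fst_div_three_eq_iff [NeZero (3 : K)] (ht : t ^ 2 = (c ^ 2 + s) / 3) :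
    (ellipticUmbilic c (c / 3, v)).1 = s ↔ v = t ∨ v = -t := by
  have difference_of_squares : (ellipticUmbilic c (c / 3, v)).1 - s = 3 * (v ^ 2 - t ^ 2) := by
    simp only [ellipticUmbilic, ht]
    field [three_ne_zero (α := K)]
  rw [← sub_eq_zero, difference_of_squares, mul_eq_zero_iff_left three_ne_zero, sub_eq_zero,
    sq_eq_sq_iff_eq_or_eq_neg]

theorem ellipticUmbilic_preimage_axis [NeZero (2 : K)] [NeZero (3 : K)]
    (hr : r ^ 2 = c ^ 2 - 3 * s) (ht : t ^ 2 = (c ^ 2 + s) / 3) :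
    ellipticUmbilic c ⁻¹' {(s, 0)} =
      {((-c + r) / 3, 0), ((-c - r) / 3, 0), (c / 3, t), (c / 3, -t)} := by
  ext ⟨u, v⟩
  have on_lines : ellipticUmbilic c (u, v) = (s, 0) ↔
      (v = 0 ∧ (ellipticUmbilic c (u, 0)).1 = s) ∨
        (u = c / 3 ∧ (ellipticUmbilic c (c / 3, v)).1 = s) := by
    rw [Prod.ext_iff, ellipticUmbilic_snd_eq_zero_iff]
    grind
  rw [Set.mem_preimage, Set.mem_singleton_iff, on_lines, ellipticUmbilic_fst_zero_right_eq_iff hr,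
    ellipticUmbilic_fst_div_three_eq_iff ht]
  simp only [Set.mem_insert_iff, Set.mem_singleton_iff, Prod.mk.injEq]
  tauto

theorem ellipticUmbilicJacobian_neg_add_div_three [NeZero (3 : K)] :
    ellipticUmbilicJacobian c ((-c + r) / 3, 0) = 4 * r * (2 * c - r) := by
  simp only [ellipticUmbilicJacobian]
  field [three_ne_zero (α := K)]

theorem ellipticUmbilicJacobian_div_three [NeZero (3 : K)] :
    ellipticUmbilicJacobian c (c / 3, v) = -36 * v ^ 2 := by
  simp only [ellipticUmbilicJacobian]
  field [three_ne_zero (α := K)]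

theorem sum_one_div_ellipticUmbilicJacobian_eq_zero [NeZero (2 : K)] [NeZero (3 : K)]
    (hrt : (2 * c - r) * (2 * c + r) = 9 * t ^ 2) (hr0 : r ≠ 0) (ht0 : t ≠ 0) :
    1 / ellipticUmbilicJacobian c ((-c + r) / 3, 0) +
      1 / ellipticUmbilicJacobian c ((-c - r) / 3, 0) +
      1 / ellipticUmbilicJacobian c (c / 3, t) +
      1 / ellipticUmbilicJacobian c (c / 3, -t) = 0 := by
  have hprod : (2 * c - r) * (2 * c + r) ≠ 0 := by
    rw [hrt, show (9 : K) * t ^ 2 = (3 * t) ^ 2 by ring]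
    exact pow_ne_zero 2 (mul_ne_zero three_ne_zero ht0)
  obtain ⟨hsub, hadd⟩ := mul_ne_zero_iff.1 hprod
  have h2 : (2 : K) ≠ 0 := two_ne_zero
  have on_axis : 1 / ellipticUmbilicJacobian c ((-c + r) / 3, 0) +
      1 / ellipticUmbilicJacobian c ((-c - r) / 3, 0) = 1 / (18 * t ^ 2) := by
    rw [sub_eq_add_neg (-c) r, ellipticUmbilicJacobian_neg_add_div_three,
      ellipticUmbilicJacobian_neg_add_div_three, sub_neg_eq_add,
      show 18 * t ^ 2 = 2 * ((2 * c - r) * (2 * c + r)) by rw [hrt]; ring,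
      show (4 : K) = 2 * 2 by norm_num]
    field_simp
    ring
  have off_axis : 1 / ellipticUmbilicJacobian c (c / 3, t) +
      1 / ellipticUmbilicJacobian c (c / 3, -t) = -(1 / (18 * t ^ 2)) := by
    rw [ellipticUmbilicJacobian_div_three, ellipticUmbilicJacobian_div_three, neg_sq,
      show -36 * t ^ 2 = -(18 * t ^ 2 * 2) by ring, one_div_neg_eq_neg_one_div, ← neg_add,
      ← div_div, add_halves]
  rw [add_assoc, on_axis, off_axis, add_neg_cancel]

end EllipticUmbilic

theorem elliptic_umbilic_generic_axis_images_general {K : Type*} [Field K] [NeZero (2 : K)]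
    [NeZero (3 : K)] {c s₁ r t : K} (hr : r ^ 2 = c ^ 2 - 3 * s₁) (ht : t ^ 2 = (c ^ 2 + s₁) / 3)
    (hr0 : r ≠ 0) (ht0 : t ≠ 0) :
    ellipticUmbilic c ⁻¹' {(s₁, 0)} =
        {((-c + r) / 3, 0), ((-c - r) / 3, 0), (c / 3, t), (c / 3, -t)} ∧
      1 / ellipticUmbilicJacobian c ((-c + r) / 3, 0) +
        1 / ellipticUmbilicJacobian c ((-c - r) / 3, 0) +
        1 / ellipticUmbilicJacobian c (c / 3, t) +
        1 / ellipticUmbilicJacobian c (c / 3, -t) = 0 := by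
  have hrt : (2 * c - r) * (2 * c + r) = 9 * t ^ 2 := by
    linear_combination -hr - 3 * (eq_div_iff three_ne_zero).1 ht
  exact ⟨ellipticUmbilic_preimage_axis hr ht,
    sum_one_div_ellipticUmbilicJacobian_eq_zero hrt hr0 ht0⟩

/-- For a source `(s₁, 0)` with `c > 0` and `−c² < s₁ < c²/3` inside the caustic of the
generic elliptic umbilic map `f_c(u,v) = (3v² − 3u² − 2cu, 6uv − 2cv)`, the solution set
of `f_c(u,v) = (s₁,0)` is exactly the four stated points, and the sum of the reciprocals
of the Jacobian determinant `4c² − 36(u² + v²)` over these points is zero. -/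
theorem elliptic_umbilic_generic_axis_images (c s₁ : ℝ) (hc : 0 < c)
    (hlo : -c ^ 2 < s₁) (hhi : s₁ < c ^ 2 / 3) :
    ({p : ℝ × ℝ | 3 * p.2 ^ 2 - 3 * p.1 ^ 2 - 2 * c * p.1 = s₁ ∧
        6 * p.1 * p.2 - 2 * c * p.2 = 0} =
      {((-c + Real.sqrt (c ^ 2 - 3 * s₁)) / 3, 0), ((-c - Real.sqrt (c ^ 2 - 3 * s₁)) / 3, 0),
        (c / 3, Real.sqrt ((c ^ 2 + s₁) / 3)), (c / 3, -Real.sqrt ((c ^ 2 + s₁) / 3))}) ∧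
    1 / (4 * c ^ 2 - 36 * (((-c + Real.sqrt (c ^ 2 - 3 * s₁)) / 3) ^ 2 + (0 : ℝ) ^ 2)) +
      1 / (4 * c ^ 2 - 36 * (((-c - Real.sqrt (c ^ 2 - 3 * s₁)) / 3) ^ 2 + (0 : ℝ) ^ 2)) +
      1 / (4 * c ^ 2 - 36 * ((c / 3) ^ 2 + (Real.sqrt ((c ^ 2 + s₁) / 3)) ^ 2)) +
      1 / (4 * c ^ 2 - 36 * ((c / 3) ^ 2 + (-Real.sqrt ((c ^ 2 + s₁) / 3)) ^ 2)) = 0 := by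
  have hr : 0 < c ^ 2 - 3 * s₁ := by linarith
  have ht : 0 < (c ^ 2 + s₁) / 3 := by linarith
  simpa only [Set.preimage, Set.mem_singleton_iff, ellipticUmbilic, Prod.mk.injEq,
    ellipticUmbilicJacobian] using elliptic_umbilic_generic_axis_images_general
      (Real.sq_sqrt hr.le) (Real.sq_sqrt ht.le) (Real.sqrt_ne_zero'.2 hr) (Real.sqrt_ne_zero'.2 ht)
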